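/- Let D > 3 and let e be a directed edge of K(2,D) whose edge-word w(e) is unbordered and square-free. If Ω(e) < (D−3)/8, then cong(e) > τ(2,D). -/

import Mathlib

/-! Walks of length `k` through `e` correspond to words `A w B` with `w = w(e)`, and there are
`2 ^ (k - 1)` of them for each position of `e`. Such a walk fails to be a geodesic exactly when some
shift `s`, `1 ≤ s ≤ k`, makes a factor of `A w B` of length at least `2 s` periodic with period `s`.
As `w` is square-free and unbordered, this factor neither lies inside `w` nor covers it, so it
overhangs `w` on exactly one side; then a prefix or suffix of `w` reoccurs in `w` at distance `s`,
and the overhanging letters are forced (`bad_le`). Hence the total deficit of `cong e` is bounded by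
a weighted count of the repeats of prefixes and of suffixes of `w` (`cong_lower`, `forcedSum_le`).

The available slack is `(D - 3) * 2 ^ (D - 2) + 1`. The sparsity hypothesis bounds the suffix part
by a third of it (`repeatWeight_le_Omega`). The prefix part is not controlled by that hypothesis,
but square-freeness alone makes it at most logarithmic in `D`: for a fixed gap between the two
occurrences, the lengths of repeated prefixes at least double (`repeatWeight_le_log`). This
suffices for `D ≥ 11`; for `4 ≤ D ≤ 10` the inequality is verified on all square-free words
(`small_words`). -/

open scoped BigOperators Classical

namespace Kautz

/-- A vertex of the Kautz digraph `K(d,D)`: a word of length `D` over the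
alphabet `{0,1,…,d}` in which adjacent letters are distinct. -/
structure Vertex (d D : ℕ) where
  word : List (Fin (d+1))
  length_eq : word.length = D
  chain : word.Chain' (· ≠ ·)

/-- Adjacency in `K(d,D)`: there is an edge `u → v` iff some word `w` of length
`D+1` with adjacent letters distinct has `u` as its prefix of length `D` and
`v` as its suffix of length `D`. -/
def Adj {d D : ℕ} (u v : Vertex d D) : Prop :=
  ∃ w : List (Fin (d+1)), w.length = D + 1 ∧ w.Chain' (· ≠ ·) ∧
    u.word = w.dropLast ∧ v.word = w.tail

/-- A directed edge of `K(d,D)`. -/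
structure Edge (d D : ℕ) where
  src : Vertex d D
  tgt : Vertex d D
  adj : Adj src tgt

/-- The edge-word `w(e) = a₀a₁⋯a_D` of an edge `e : u → v`, namely `u`
followed by the last letter of `v`. -/
def Edge.word {d D : ℕ} (e : Edge d D) : List (Fin (d+1)) :=
  e.src.word ++ e.tgt.word.drop (D - 1)

/-- `p` is a walk from `x` to `y`, recorded as the list of successive vertices. -/
def IsWalk {d D : ℕ} (p : List (Vertex d D)) (x y : Vertex d D) : Prop :=
  p.head? = some x ∧ p.getLast? = some y ∧ p.Chain' Adj

/-- Directed graph distance in `K(d,D)`. -/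
noncomputable def dist {d D : ℕ} (x y : Vertex d D) : ℕ :=
  sInf {k | ∃ p : List (Vertex d D), IsWalk p x y ∧ p.length = k + 1}

/-- `N(e;k,t)`: the number of ordered pairs `(x,y)` with `dist x y = k` such
that some geodesic (walk of length `k = dist x y`) from `x` to `y` uses `e` as
its `t`-th edge. -/
noncomputable def N {d D : ℕ} (e : Edge d D) (k t : ℕ) : ℕ :=
  Set.ncard {xy : Vertex d D × Vertex d D |
    dist xy.1 xy.2 = k ∧
    ∃ p : List (Vertex d D), IsWalk p xy.1 xy.2 ∧ p.length = k + 1 ∧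
      p[t-1]? = some e.src ∧ p[t]? = some e.tgt}

/-- `U_k(e) = ∑_{t=1}^{k} N(e;k,t)`. -/
noncomputable def U {d D : ℕ} (e : Edge d D) (k : ℕ) : ℕ :=
  ∑ t ∈ Finset.Icc 1 k, N e k t

/-- `cong(e) = ∑_{k=1}^{D} U_k(e)`. -/
noncomputable def cong {d D : ℕ} (e : Edge d D) : ℕ :=
  ∑ k ∈ Finset.Icc 1 D, U e k

/-- `τ(d,D) = (D−1)·d^{D−2} + D·d^{D−1}`. -/
def tau (d D : ℕ) : ℕ := (D - 1) * d ^ (D - 2) + D * d ^ (D - 1)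

/-- A word has a border: some proper nonempty prefix equals the suffix of the
same length. -/
def HasBorder {α : Type*} (w : List α) : Prop :=
  ∃ ℓ, 1 ≤ ℓ ∧ ℓ ≤ w.length - 1 ∧ w.take ℓ = w.drop (w.length - ℓ)

/-- An unbordered word. -/
def Unbordered {α : Type*} (w : List α) : Prop := ¬ HasBorder w

/-- A square-free word: no nonempty factor of the form `XX`. -/
def SquareFree {α : Type*} (w : List α) : Prop :=
  ¬ ∃ X : List α, X ≠ [] ∧ (X ++ X) <:+: w

/-- A `7/4⁺`-power-free word: no factor `x^k y` with `x` nonempty, `k ≥ 1`,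
`y` a prefix of `x`, and `(k·|x| + |y|)/|x| > 7/4`. -/
def SevenFourthsPlusFree {α : Type*} (w : List α) : Prop :=
  ¬ ∃ (x y : List α) (k : ℕ), x ≠ [] ∧ 1 ≤ k ∧ y <+: x ∧
    ((List.replicate k x).flatten ++ y) <:+: w ∧
    7 * x.length < 4 * (k * x.length + y.length)

/-- A word over `{0,1,…,d}` is ternary if it uses only the letters `{0,1,2}`. -/
def IsTernary {n : ℕ} (w : List (Fin n)) : Prop := ∀ a ∈ w, (a : ℕ) < 3

/-- The suffix of `w` of length `t`. -/
def suffixWord {α : Type*} (w : List α) (t : ℕ) : List α := w.drop (w.length - t)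

/-- `R_t(w)`: the set of admissible overlap lengths `r` at position `t`, i.e.
those `r` with `t+1 ≤ r ≤ |w|−t−1` such that `w = A·B·V·B` where `B` is the
suffix of `w` of length `t`, `V` is nonempty, and `|B·V| = r`. -/
noncomputable def Rt {α : Type*} (w : List α) (t : ℕ) : Finset ℕ :=
  (Finset.Icc (t + 1) (w.length - t - 1)).filter fun r =>
    ∃ A V : List α, V ≠ [] ∧
      w = A ++ suffixWord w t ++ V ++ suffixWord w t ∧ t + V.length = r

/-- The deficit `Δ_t(e) = d^{D−1} − N(e;D,t)`. -/
noncomputable def deficit {d D : ℕ} (e : Edge d D) (t : ℕ) : ℝ :=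
  (d : ℝ) ^ (D - 1) - (N e D t : ℝ)

/-- The total deficit `Δ(e) = ∑_{t=1}^{D} Δ_t(e)`. -/
noncomputable def totalDeficit {d D : ℕ} (e : Edge d D) : ℝ :=
  ∑ t ∈ Finset.Icc 1 D, deficit e t

/-- The weighted overlap count
`Ω_d(e) = ∑_{j=1}^{⌈(D+1)/2⌉} ∑_{r ∈ R_j(w(e))} d^{−(r−j)}`. -/
noncomputable def Omega {d D : ℕ} (e : Edge d D) : ℝ :=
  ∑ j ∈ Finset.Icc 1 ((D + 2) / 2), ∑ r ∈ Rt e.word j, (d : ℝ) ^ ((j : ℤ) - (r : ℤ))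

/-- The overlap `ov(u,v)`: the largest `j ≤ D` such that the last `j` letters
of `u` equal the first `j` letters of `v`. -/
noncomputable def ov {d D : ℕ} (u v : Vertex d D) : ℕ :=
  sSup {j | j ≤ D ∧ u.word.drop (D - j) = v.word.take j}

end Kautz

namespace Kautz

/-! ### Repeats in words -/

/-- The prefix of `w` of length `j` reoccurs at position `s`. The default letter of `getD` is never
read when `s + j ≤ w.length`. Repeats of suffixes are expressed as `Pre w.reverse j s`. -/
def Pre (w : List (Fin 3)) (j s : ℕ) : Prop := ∀ i < j, w.getD i 0 = w.getD (s + i) 0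

instance (w : List (Fin 3)) (j s : ℕ) : Decidable (Pre w j s) :=
  inferInstanceAs (Decidable (∀ i < j, w.getD i 0 = w.getD (s + i) 0))

/-- The sum of `2 ^ (D - 1) * 2 ^ (j - s)` over all non-overlapping, non-adjacent repeats
`Pre w j s` in a word of length `D + 1`. -/
def repeatWeight (w : List (Fin 3)) (D : ℕ) : ℕ :=
  ∑ j ∈ Finset.Icc 1 D, ∑ s ∈ Finset.Icc 1 D,
    if j + 1 ≤ s ∧ s + j ≤ D ∧ Pre w j s then 2 ^ (D - 1 + j - s) else 0

theorem SquareFree.no_square {w : List (Fin 3)} (hw : SquareFree w) {i p : ℕ} (hp : 1 ≤ p)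
    (hl : i + 2 * p ≤ w.length) (h : ∀ t < p, w.getD (i + t) 0 = w.getD (i + p + t) 0) :
    False := by
  apply hw
  refine ⟨(w.drop i).take p, ?_, w.take i, w.drop (i + 2 * p), ?_⟩
  · intro h0
    have := congrArg List.length h0
    simp at this
    omega
  · apply List.ext_getElem
    · simp; omega
    · intro t h1 h2
      have key : ∀ u, (hu : u < p) → w[i + u]'(by omega) = w[i + p + u]'(by omega) := by
        intro u hu
        have := h u hu
        rwa [List.getD_eq_getElem _ _ (by omega), List.getD_eq_getElem _ _ (by omega)] at this
      simp only [List.getElem_append, List.getElem_take, List.getElem_drop, List.length_append,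
        List.length_take, List.length_drop]
      split_ifs with a1 a2 a3
      · rfl
      · congr 1; omega
      · have := key (t - (i + p)) (by omega)
        convert this using 2 <;> omega
      · congr 1; omega

theorem Unbordered.no_period {w : List (Fin 3)} (hw : Unbordered w) {s : ℕ} (hs : 1 ≤ s)
    (hl : s < w.length) (h : ∀ t, t + s < w.length → w.getD t 0 = w.getD (t + s) 0) :
    False := by
  apply hw
  refine ⟨w.length - s, by omega, by omega, ?_⟩
  apply List.ext_getElem
  · simp; omega
  · intro t h1 h2
    simp at h1 h2
    have := h t (by omega)
    rw [List.getD_eq_getElem _ _ (by omega), List.getD_eq_getElem _ _ (by omega)] at this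
    simp only [List.getElem_take, List.getElem_drop, this]
    congr 1; omega

/-! ### Short square-free words -/

/-- No prefix of `w` is a square. -/
def noPrefSq (w : List (Fin 3)) : Bool :=
  (List.range (w.length / 2)).all fun p => w.take (p + 1) != (w.drop (p + 1)).take (p + 1)

/-- The words of length `n` over `{0,1,2}`, each built letter by letter from the right so that no
suffix of it has a square prefix. -/
def gen : ℕ → List (List (Fin 3))
  | 0 => [[]]
  | n + 1 => (gen n).flatMap fun w => ([0 :: w, 1 :: w, 2 :: w]).filter noPrefSq

/-- `gen n` contains every square-free word of length `n`. -/
theorem SquareFree.mem_gen : ∀ (n : ℕ) (w : List (Fin 3)), SquareFree w → w.length = n → w ∈ gen n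
  | 0, w, _, hl => by
    have := List.length_eq_zero_iff.mp hl
    simp [gen, this]
  | n + 1, [], _, hl => by simp at hl
  | n + 1, c :: w, hw, hl => by
    have h1 : SquareFree w := fun ⟨X, hX, hi⟩ => hw ⟨X, hX, hi.trans (List.suffix_cons c w).isInfix⟩
    have := SquareFree.mem_gen n w h1 (by simpa using hl)
    simp only [gen, List.mem_flatMap, List.mem_filter]
    refine ⟨w, this, ?_, ?_⟩
    · fin_cases c <;> simp
    · simp only [noPrefSq, List.all_eq_true, List.mem_range, bne_iff_ne]
      intro p hp heq
      apply hw
      refine ⟨(c :: w).take (p + 1), by simp, [], ((c :: w).drop (p + 1)).drop (p + 1), ?_⟩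
      conv_rhs => rw [← List.take_append_drop (p + 1) (c :: w),
        ← List.take_append_drop (p + 1) ((c :: w).drop (p + 1)), ← heq]
      simp

/-- In a short square-free word, either the repeats of prefixes and suffixes are few, or those of
suffixes alone already violate the sparsity hypothesis. -/
theorem small_words : ∀ D ∈ Finset.Icc 4 10, ∀ w ∈ gen (D + 1),
    8 * (repeatWeight w D + repeatWeight w.reverse D) ≤ 3 * (D - 3) * 2 ^ (D - 1) ∨
      (D - 3) * 2 ^ (D - 1) ≤ 8 * repeatWeight w.reverse D := by
  decide +kernel

/-! ### Repeats in long square-free words -/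

/-- A set of positive integers whose elements more than double has logarithmic size: `j ↦ log₂(j+1)`
is injective on it. -/
theorem card_le_log (S : Finset ℕ) (m : ℕ) (h1 : ∀ j ∈ S, 1 ≤ j ∧ j + 1 ≤ m)
    (h : ∀ j ∈ S, ∀ j' ∈ S, j < j' → 2 * j + 1 ≤ j') : S.card ≤ Nat.log 2 m := by
  have key : ∀ j ∈ S, ∀ j' ∈ S, j < j' → Nat.log 2 (j + 1) < Nat.log 2 (j' + 1) := by
    intro j hj j' hj' hlt
    have h2 := h j hj j' hj' hlt
    calc Nat.log 2 (j + 1) < Nat.log 2 ((j + 1) * 2) := by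
          rw [Nat.log_mul_base (by norm_num) (by omega)]; omega
      _ ≤ _ := Nat.log_mono_right (by omega)
  have : S.card ≤ (Finset.Icc 1 (Nat.log 2 m)).card := by
    apply Finset.card_le_card_of_injOn (fun j => Nat.log 2 (j + 1))
    · intro j hj
      have := h1 j hj
      simp only [Finset.coe_Icc, Set.mem_Icc]
      exact ⟨Nat.log_pos (by norm_num) (by omega), Nat.log_mono_right this.2⟩
    · intro j hj j' hj' he
      rcases lt_trichotomy j j' with hl | hl | hl
      · have := key j hj j' hj' hl; simp at he; omega
      · exact hl
      · have := key j' hj' j hj hl; simp at he; omega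
  simpa using this

theorem sum_pow_le (n : ℕ) : ∑ c ∈ Finset.Icc 1 n, 2 ^ (n - c) ≤ 2 ^ n := by
  have : ∀ n : ℕ, ∑ c ∈ Finset.Icc 1 n, 2 ^ (n - c) + 1 ≤ 2 ^ n := by
    intro n
    induction n with
    | zero => simp
    | succ n ih =>
      rw [Finset.sum_Icc_succ_top (by omega)]
      have : ∑ c ∈ Finset.Icc 1 n, 2 ^ (n + 1 - c) = 2 * ∑ c ∈ Finset.Icc 1 n, 2 ^ (n - c) := by
        rw [Finset.mul_sum]
        apply Finset.sum_congr rfl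
        intro c hc
        simp at hc
        rw [show n + 1 - c = (n - c) + 1 by omega, pow_succ]; ring
      rw [this, pow_succ]
      simp
      omega
  have := this n
  omega

/-- Among the repeats `Pre w j (j + c)` with a fixed gap `c`, the length `j` more than doubles from
one to the next, as two occurrences of a word at distance at most its length form a square. The
weights `2 ^ (D - 1 - c)` of the gaps add up to at most `2 ^ (D - 1)`. -/
theorem repeatWeight_le_log {w : List (Fin 3)} {D : ℕ} (hw : SquareFree w) (hl : w.length = D + 1) :
    repeatWeight w D ≤ 2 ^ (D - 1) * Nat.log 2 ((D + 1) / 2) := by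
  have h1 : repeatWeight w D ≤ ∑ c ∈ Finset.Icc 1 (D - 1), ∑ j ∈ Finset.Icc 1 D,
      if 2 * j + c ≤ D ∧ Pre w j (j + c) then 2 ^ (D - 1 - c) else 0 := by
    unfold repeatWeight
    rw [Finset.sum_comm (s := Finset.Icc 1 (D - 1))]
    apply Finset.sum_le_sum
    intro j hj
    simp only [Finset.mem_Icc] at hj
    simp only [← Finset.sum_filter]
    rw [← Finset.sum_image (s := (Finset.Icc 1 (D - 1)).filter
        (fun c => 2 * j + c ≤ D ∧ Pre w j (j + c))) (g := fun c => j + c)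
        (f := fun s => 2 ^ (D - 1 + j - s)) (by intro a _ b _ h; simpa using h) |>.trans
        (Finset.sum_congr rfl (fun c hc => by congr 1; omega))]
    apply Finset.sum_le_sum_of_subset
    intro s hs
    simp only [Finset.mem_filter, Finset.mem_Icc, Finset.mem_image] at hs ⊢
    refine ⟨s - j, ⟨by omega, by omega, ?_⟩, by omega⟩
    rw [show j + (s - j) = s by omega]
    exact hs.2.2.2
  have h2 : ∀ c ∈ Finset.Icc 1 (D - 1), (∑ j ∈ Finset.Icc 1 D,
      if 2 * j + c ≤ D ∧ Pre w j (j + c) then 2 ^ (D - 1 - c) else 0)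
      ≤ 2 ^ (D - 1 - c) * Nat.log 2 ((D + 1) / 2) := by
    intro c hc
    rw [← Finset.sum_filter, Finset.sum_const, smul_eq_mul, mul_comm]
    apply Nat.mul_le_mul_left
    simp only [Finset.mem_Icc] at hc
    apply card_le_log
    · intro j hj
      simp only [Finset.mem_filter, Finset.mem_Icc] at hj
      omega
    · intro j hj j' hj' hlt
      simp only [Finset.mem_filter, Finset.mem_Icc] at hj hj'
      by_contra hcon
      -- two occurrences of the prefix of length `j` at distance `j' - j ≤ j` form a square
      refine hw.no_square (i := j + c) (p := j' - j) (by omega) (by omega) ?_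
      intro t ht
      rw [← hj.2.2 t (by omega), hj'.2.2 t (by omega)]
      congr 1; omega
  calc repeatWeight w D ≤ _ := h1
    _ ≤ ∑ c ∈ Finset.Icc 1 (D - 1), 2 ^ (D - 1 - c) * Nat.log 2 ((D + 1) / 2) :=
        Finset.sum_le_sum h2
    _ = (∑ c ∈ Finset.Icc 1 (D - 1), 2 ^ (D - 1 - c)) * Nat.log 2 ((D + 1) / 2) := by
        rw [Finset.sum_mul]
    _ ≤ _ := Nat.mul_le_mul_right _ (sum_pow_le _)

theorem four_log_le {D : ℕ} (hD : 11 ≤ D) : 4 * Nat.log 2 ((D + 1) / 2) ≤ D - 3 := by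
  have h := Nat.pow_log_le_self 2 (x := (D + 1) / 2) (by omega)
  set L := Nat.log 2 ((D + 1) / 2)
  by_cases hL : L ≤ 2
  · omega
  · have : ∀ L, 3 ≤ L → 2 * L + 2 ≤ 2 ^ L := by
      intro L hL
      induction L, hL using Nat.le_induction with
      | base => norm_num
      | succ n hn ih => rw [pow_succ]; omega
    have := this L (by omega)
    omega

/-- A square-free word whose suffix repeats are sparse does not admit too many repeats in total. -/
theorem repeats_bound {w : List (Fin 3)} {D : ℕ} (hD : 4 ≤ D) (hw : SquareFree w)
    (hl : w.length = D + 1) (h : 8 * repeatWeight w.reverse D < (D - 3) * 2 ^ (D - 1)) :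
    8 * (repeatWeight w D + repeatWeight w.reverse D) ≤ 3 * (D - 3) * 2 ^ (D - 1) := by
  by_cases hD' : D ≤ 10
  · rcases small_words D (by simp; omega) w (hw.mem_gen _ _ hl) with h' | h'
    · exact h'
    · omega
  · have h1 := repeatWeight_le_log hw hl
    have h2 := four_log_le (D := D) (by omega)
    nlinarith [Nat.mul_le_mul_left (2 ^ (D - 1)) h2]

/-! ### The total deficit in terms of repeats -/

/-- An upper bound on the number of contexts `A w B`, with `|A| = a` and `|A| + |B| = k - 1`, in which
the shift `s` produces a shortcut that overhangs `w` on the left only. Such a shortcut makes the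
prefix of `w` of length `D - a` reoccur at position `s`, and forces `s - |B| - 1` letters of `A`. -/
def forcedTerm (w : List (Fin 3)) (D k a s : ℕ) : ℕ :=
  if k - 1 - a + 2 ≤ s ∧ s ≤ a ∧ Pre w (D - a) s then 2 ^ (k - s + (k - 1 - a)) else 0

/-- The sum of `forcedTerm` over all distances `k ≤ D`, positions `a` and shifts `s`. Applied to the
reversed word it accounts for the shortcuts overhanging on the right. -/
def forcedSum (w : List (Fin 3)) (D : ℕ) : ℕ :=
  ∑ k ∈ Finset.Icc 1 D, ∑ a ∈ Finset.range k, ∑ s ∈ Finset.Icc 1 k, forcedTerm w D k a s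

/-- Summing over the distances is a geometric series of ratio `4`; the bound is set up with
truncated terms so that the induction closes. -/
theorem geom_bound (e D : ℕ) :
    3 * ∑ k ∈ Finset.Icc 1 D, (if e ≤ 2 * k then 2 ^ (2 * k - e) else 0) ≤
      if e ≤ 2 * D then 4 * 2 ^ (2 * D - e) else 0 := by
  induction D with
  | zero => simp
  | succ n ih =>
    rw [Finset.sum_Icc_succ_top (by omega), mul_add]
    by_cases h : e ≤ 2 * n
    · rw [if_pos h] at ih
      rw [if_pos (by omega), if_pos (by omega), show 2 * (n + 1) - e = 2 * n - e + 2 by omega,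
        pow_add]
      omega
    · rw [if_neg h] at ih
      split_ifs
      · omega
      · omega

/-- In a square-free word every repeat `Pre w j s` has `j < s`, and it contributes to `forcedSum`
once for each of several distances `k`, with weights decreasing by a factor `4`. -/
theorem forcedSum_le {w : List (Fin 3)} {D : ℕ} (hw : SquareFree w) (hl : w.length = D + 1) :
    3 * forcedSum w D ≤ 4 * repeatWeight w D := by
  have h1 : forcedSum w D ≤ ∑ a ∈ Finset.range D, ∑ s ∈ Finset.Icc 1 D, ∑ k ∈ Finset.Icc 1 D,
      if D - a + 1 ≤ s ∧ s + (D - a) ≤ D ∧ Pre w (D - a) s then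
        (if 1 + a + s ≤ 2 * k then 2 ^ (2 * k - (1 + a + s)) else 0) else 0 := by
    rw [Finset.sum_congr rfl (fun a _ => Finset.sum_comm), Finset.sum_comm (s := Finset.range D)]
    apply Finset.sum_le_sum
    intro k hk
    simp only [Finset.mem_Icc] at hk
    refine le_trans (Finset.sum_le_sum (fun a ha => ?_)) (Finset.sum_le_sum_of_subset
      (Finset.range_subset_range.mpr hk.2))
    simp only [Finset.mem_range] at ha
    refine le_trans (Finset.sum_le_sum (fun s hs => ?_)) (Finset.sum_le_sum_of_subset
      (Finset.Icc_subset_Icc_right hk.2))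
    simp only [Finset.mem_Icc] at hs
    unfold forcedTerm
    split_ifs with c1 c2 c3 <;> try exact Nat.zero_le _
    · apply le_of_eq; congr 1; omega
    · omega
    · exfalso
      apply c2
      refine ⟨?_, by omega, c1.2.2⟩
      by_contra hcon
      refine hw.no_square (i := 0) (p := s) (by omega) (by omega) ?_
      intro t ht
      have := c1.2.2 t (by omega)
      simpa using this
  have h2 : repeatWeight w D = ∑ a ∈ Finset.range D, ∑ s ∈ Finset.Icc 1 D,
      if D - a + 1 ≤ s ∧ s + (D - a) ≤ D ∧ Pre w (D - a) s then
        2 ^ (2 * D - (1 + a + s)) else 0 := by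
    unfold repeatWeight
    refine Finset.sum_nbij' (fun j => D - j) (fun a => D - a) ?_ ?_ ?_ ?_ ?_
    · intro j hj; simp at hj ⊢; omega
    · intro j hj; simp at hj ⊢; omega
    · intro j hj; simp at hj ⊢; omega
    · intro j hj; simp at hj ⊢; omega
    · intro j hj
      simp only [Finset.mem_Icc] at hj
      rw [show D - (D - j) = j by omega]
      refine Finset.sum_congr rfl (fun s hs => ?_)
      split_ifs
      · congr 1; omega
      · rfl
  refine le_trans (Nat.mul_le_mul_left 3 h1) ?_
  rw [h2, Finset.mul_sum, Finset.mul_sum]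
  apply Finset.sum_le_sum
  intro a ha
  rw [Finset.mul_sum, Finset.mul_sum]
  apply Finset.sum_le_sum
  intro s hs
  split_ifs with c
  · have := geom_bound (1 + a + s) D
    refine this.trans ?_
    split_ifs <;> simp
  · simp

theorem getD_reverse {w : List (Fin 3)} {i : ℕ} (h : i < w.length) :
    w.reverse.getD i 0 = w.getD (w.length - 1 - i) 0 := by
  rw [List.getD_eq_getElem _ _ (by simpa using h), List.getD_eq_getElem _ _ (by omega),
    List.getElem_reverse]

theorem mem_Rt {w : List (Fin 3)} {D j s : ℕ} (hl : w.length = D + 1) (h1 : j + 1 ≤ s)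
    (h2 : s + j ≤ D) (h : Pre w.reverse j s) : s ∈ Rt w j := by
  simp only [Rt, Finset.mem_filter, Finset.mem_Icc]
  refine ⟨by omega, w.take (D + 1 - j - s), (w.drop (D + 1 - s)).take (s - j), ?_, ?_, ?_⟩
  · intro h0
    have := congrArg List.length h0
    simp at this
    omega
  · unfold suffixWord
    apply List.ext_getElem
    · simp; omega
    · intro t ht1 ht2
      simp only [List.getElem_append, List.getElem_take, List.getElem_drop, List.length_append,
        List.length_take, List.length_drop]
      split_ifs with a1 a2 a3
      · rfl
      · have := h (D + 1 - s - 1 - t) (by omega)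
        rw [getD_reverse (by omega), getD_reverse (by omega), List.getD_eq_getElem _ _ (by omega),
          List.getD_eq_getElem _ _ (by omega)] at this
        convert this.symm using 2 <;> omega
      · congr 1; omega
      · congr 1; omega
  · simp; omega

theorem repeatWeight_le_Omega {D : ℕ} (hD : 1 ≤ D) (e : Edge 2 D) (hl : e.word.length = D + 1) :
    (repeatWeight e.word.reverse D : ℝ) ≤ 2 ^ (D - 1) * Omega e := by
  unfold repeatWeight Omega
  push_cast
  rw [Finset.mul_sum]
  have : ∑ j ∈ Finset.Icc 1 D, (∑ s ∈ Finset.Icc 1 D,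
        if j + 1 ≤ s ∧ s + j ≤ D ∧ Pre e.word.reverse j s then (2 : ℝ) ^ (D - 1 + j - s) else 0)
      = ∑ j ∈ (Finset.Icc 1 D).filter (fun j => 2 * j + 1 ≤ D), (∑ s ∈ Finset.Icc 1 D,
        if j + 1 ≤ s ∧ s + j ≤ D ∧ Pre e.word.reverse j s then (2 : ℝ) ^ (D - 1 + j - s) else 0) := by
    rw [Finset.sum_filter_of_ne]
    intro j hj hne
    obtain ⟨s, hs, hs'⟩ := Finset.exists_ne_zero_of_sum_ne_zero hne
    by_contra hcon
    apply hs'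
    rw [if_neg]
    omega
  rw [this]
  refine le_trans (Finset.sum_le_sum (g := fun j =>
    2 ^ (D - 1) * ∑ r ∈ Rt e.word j, (2 : ℝ) ^ ((j : ℤ) - (r : ℤ))) (fun j hj => ?_))
    (Finset.sum_le_sum_of_subset_of_nonneg ?_ ?_)
  · rw [← Finset.sum_filter, Finset.mul_sum]
    refine le_trans (le_of_eq (Finset.sum_congr rfl (g := fun s : ℕ => (2 : ℝ) ^ (D - 1) *
      (2 : ℝ) ^ ((j : ℤ) - (s : ℤ))) (fun s hs => ?_)))
      (Finset.sum_le_sum_of_subset_of_nonneg ?_ ?_)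
    · simp only [Finset.mem_filter, Finset.mem_Icc] at hs hj
      rw [← zpow_natCast, ← zpow_natCast, ← zpow_add₀ (by norm_num)]
      congr 1
      omega
    · intro s hs
      simp only [Finset.mem_filter, Finset.mem_Icc] at hs
      exact mem_Rt hl hs.2.1 hs.2.2.1 hs.2.2.2
    · intros; positivity
  · intro j hj
    simp only [Finset.mem_filter, Finset.mem_Icc] at hj ⊢
    omega
  · intros; positivity

theorem reverse_squareFree {w : List (Fin 3)} (hw : SquareFree w) : SquareFree w.reverse := by
  rintro ⟨X, hX, h⟩
  apply hw
  refine ⟨X.reverse, by simpa using hX, ?_⟩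
  rw [← List.reverse_append]
  simpa using List.reverse_infix.mpr h

theorem sum_k_pow (D : ℕ) : ∑ k ∈ Finset.Icc 1 D, (k : ℤ) * 2 ^ (k - 1) = (D - 1) * 2 ^ D + 1 := by
  induction D with
  | zero => simp
  | succ n ih =>
    rw [Finset.sum_Icc_succ_top (by omega), ih]
    simp [pow_succ]; ring

/-- Without deficits `cong e` would be `∑ k * 2 ^ (k - 1) = tau 2 D + (D - 3) * 2 ^ (D - 2) + 1`, so a
deficit of at most `(D - 3) * 2 ^ (D - 2)` suffices. -/
theorem final_arith {D : ℕ} (hD : 3 < D) (e : Edge 2 D) (hl : e.word.length = D + 1)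
    (hsf : SquareFree e.word) (hW : Omega e < ((D : ℝ) - 3) / 8)
    (hc : ∑ k ∈ Finset.Icc 1 D, k * 2 ^ (k - 1) ≤ cong e + (forcedSum e.word D + forcedSum e.word.reverse D)) :
    tau 2 D < cong e := by
  have h1 := forcedSum_le hsf hl
  have h2 := forcedSum_le (reverse_squareFree hsf) (by simpa using hl)
  have h3 : 8 * repeatWeight e.word.reverse D < (D - 3) * 2 ^ (D - 1) := by
    have h4 := repeatWeight_le_Omega (by omega) e hl
    have h5 : (2 : ℝ) ^ (D - 1) * Omega e < 2 ^ (D - 1) * (((D : ℝ) - 3) / 8) :=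
      mul_lt_mul_of_pos_left hW (by positivity)
    rw [← Nat.cast_lt (α := ℝ)]
    push_cast [Nat.cast_sub (show 3 ≤ D by omega)]
    linarith
  have h6 := repeats_bound (by omega) hsf hl h3
  have h7 := sum_k_pow D
  unfold tau
  obtain ⟨m, rfl⟩ : ∃ m, D = m + 4 := ⟨D - 4, by omega⟩
  zify at *
  rw [h7] at hc
  simp only [show m + 4 - 1 = m + 3 by omega, show m + 4 - 2 = m + 2 by omega,
    show m + 4 - 3 = m + 1 by omega, pow_succ] at *
  push_cast at *
  generalize ((2:ℤ)^m) = P at *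
  nlinarith

/-! ### Extensions of a word -/

/-- The words `B` of length `m` for which `c :: B` has distinct adjacent letters. -/
def rightExt : ℕ → Fin 3 → Finset (List (Fin 3))
  | 0, _ => {[]}
  | m + 1, c => (Finset.univ.filter (· ≠ c)).biUnion fun x => (rightExt m x).image (x :: ·)

theorem mem_rightExt : ∀ (m : ℕ) (c : Fin 3) (B : List (Fin 3)), B ∈ rightExt m c →
    B.length = m ∧ (c :: B).IsChain (· ≠ ·)
  | 0, c, B, h => by
    simp only [rightExt, Finset.mem_singleton] at h
    subst h
    simp
  | m + 1, c, B, h => by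
    simp only [rightExt, Finset.mem_biUnion, Finset.mem_filter, Finset.mem_univ, true_and,
      Finset.mem_image] at h
    obtain ⟨x, hx, B', hB', rfl⟩ := h
    obtain ⟨h1, h2⟩ := mem_rightExt m x B' hB'
    refine ⟨by simp [h1], ?_⟩
    rw [List.isChain_cons_cons]
    exact ⟨hx.symm, h2⟩

theorem card_rightExt : ∀ (m : ℕ) (c : Fin 3), (rightExt m c).card = 2 ^ m
  | 0, _ => by simp [rightExt]
  | m + 1, c => by
    rw [rightExt, Finset.card_biUnion]
    · simp_rw [Finset.card_image_of_injective _ (List.cons_injective), card_rightExt m]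
      rw [Finset.sum_const, smul_eq_mul, pow_succ, mul_comm]
      congr 1
      fin_cases c <;> decide
    · intro x _ y _ hxy
      rw [Function.onFun, Finset.disjoint_left]
      intro B h1 h2
      simp only [Finset.mem_image] at h1 h2
      obtain ⟨_, _, rfl⟩ := h1
      obtain ⟨_, _, h⟩ := h2
      simp at h
      exact hxy h.1.symm

/-- Each letter fixed in advance at least halves the number of extensions. -/
theorem card_fixed : ∀ (F : List (Fin 3)) (m : ℕ) (c : Fin 3), F.length ≤ m →
    ((rightExt m c).filter (fun B => F <+: B)).card ≤ 2 ^ (m - F.length)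
  | [], m, c, _ => by simp [card_rightExt]
  | x :: F, 0, c, h => by simp at h
  | x :: F, m + 1, c, h => by
    have ih := card_fixed F m x (by simpa using h)
    calc _ ≤ (((rightExt m x).filter (fun B => F <+: B)).image (x :: ·)).card := by
          apply Finset.card_le_card
          intro B hB
          simp only [rightExt, Finset.mem_biUnion, Finset.mem_filter, Finset.mem_univ, true_and,
            Finset.mem_image] at hB ⊢
          obtain ⟨⟨y, hy, B', hB', rfl⟩, hp⟩ := hB
          rw [List.cons_prefix_cons] at hp
          obtain ⟨rfl, hp⟩ := hp
          exact ⟨B', ⟨hB', hp⟩, rfl⟩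
      _ ≤ _ := Finset.card_image_le
      _ ≤ _ := by
          refine ih.trans (le_of_eq ?_)
          simp

theorem prefix_of_getD {B : List (Fin 3)} {f : ℕ} (g : ℕ → Fin 3) (hf : f ≤ B.length)
    (h : ∀ i < f, B.getD i 0 = g i) : List.ofFn (fun i : Fin f => g i) <+: B := by
  rw [List.prefix_iff_eq_take]
  apply List.ext_getElem
  · simpa using hf
  · intro i h1 h2
    simp at h1
    have := h i h1
    rw [List.getD_eq_getElem _ _ (by omega)] at this
    simp [this]

/-! ### Walks as words -/

theorem Vertex.ext' {d D : ℕ} {x y : Vertex d D} (h : x.word = y.word) : x = y := by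
  cases x; cases y; simp at h; subst h; rfl

instance {d D : ℕ} : Finite (Vertex d D) := by
  have : Finite {l : List (Fin (d + 1)) // l.length = D} :=
    inferInstanceAs (Finite (List.Vector (Fin (d + 1)) D))
  exact Finite.of_injective
    (fun v : Vertex d D => (⟨v.word, v.length_eq⟩ : {l : List (Fin (d + 1)) // l.length = D}))
    (fun x y h => Vertex.ext' (by simpa using h))

theorem Edge.word_facts {D : ℕ} (hD : 1 ≤ D) (e : Edge 2 D) :
    e.word.length = D + 1 ∧ e.word.IsChain (· ≠ ·) ∧ e.word.take D = e.src.word ∧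
      e.word.drop 1 = e.tgt.word := by
  obtain ⟨w, hl, hc, h1, h2⟩ := e.adj
  have : e.word = w := by
    unfold Edge.word
    rw [h1, h2]
    apply List.ext_getElem
    · simp; omega
    · intro i a1 a2
      simp only [List.getElem_append, List.getElem_dropLast, List.getElem_drop, List.getElem_tail,
        List.length_dropLast]
      split_ifs
      · rfl
      · congr 1; omega
  rw [this, h1, h2]
  refine ⟨hl, hc, ?_, by simp⟩
  rw [List.dropLast_eq_take]; congr 1; omega

theorem Adj.getD {D : ℕ} {u v : Vertex 2 D} (h : Adj u v) {i : ℕ} (hi : i + 1 < D) :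
    v.word.getD i 0 = u.word.getD (i + 1) 0 := by
  obtain ⟨w, hl, hc, h1, h2⟩ := h
  rw [h1, h2, List.getD_eq_getElem _ _ (by simp; omega), List.getD_eq_getElem _ _ (by simp; omega)]
  simp

/-- A walk of length `r` from `x` to `y` forces `y` to begin with the last `D - r` letters of `x`. -/
theorem walk_getD {D : ℕ} : ∀ (p : List (Vertex 2 D)) (x y : Vertex 2 D) (r : ℕ), IsWalk p x y →
    p.length = r + 1 → ∀ i, i + r < D → y.word.getD i 0 = x.word.getD (i + r) 0
  | [], x, y, r, h, hl, i, hi => by simp at hl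
  | [u], x, y, r, h, hl, i, hi => by
    obtain ⟨h1, h2, _⟩ := h
    simp at h1 h2 hl
    subst h1 h2 hl
    rfl
  | u :: v :: p, x, y, 0, h, hl, i, hi => by simp at hl
  | u :: v :: p, x, y, r + 1, ⟨h1, h2, h3⟩, hl, i, hi => by
    simp only [List.head?_cons, Option.some.injEq] at h1
    subst h1
    have h3' : List.IsChain Adj (u :: v :: p) := h3
    rw [List.isChain_cons_cons] at h3'
    rw [walk_getD (v :: p) v y r ⟨rfl, by simpa using h2, h3'.2⟩ (by simpa using hl) i (by omega),
      h3'.1.getD (by omega)]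
    rfl

/-- The factors of length `D` of a word of length `D + k` form a walk of length `k`. -/
theorem exists_walk {D k : ℕ} (z : List (Fin 3)) (hl : z.length = D + k)
    (hc : z.IsChain (· ≠ ·)) : ∃ p : List (Vertex 2 D), p.length = k + 1 ∧ p.Chain' Adj ∧
      ∀ i ≤ k, ∃ v, p[i]? = some v ∧ v.word = (z.drop i).take D := by
  let vt : Fin (k + 1) → Vertex 2 D := fun i =>
    ⟨(z.drop i).take D, by simp; omega, (hc.drop _).take _⟩
  refine ⟨List.ofFn vt, by simp, ?_, ?_⟩
  · change List.IsChain Adj _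
    rw [List.isChain_iff_getElem]
    intro i hi
    simp at hi
    refine ⟨(z.drop i).take (D + 1), by simp; omega, (hc.drop _).take _, ?_, ?_⟩
    · simp only [List.getElem_ofFn, vt]
      rw [List.dropLast_eq_take, List.take_take]
      congr 1
      simp; omega
    · simp only [List.getElem_ofFn, vt]
      rw [← List.drop_one, List.drop_take, List.drop_drop]
      simp
  · intro i hi
    refine ⟨vt ⟨i, by omega⟩, ?_, rfl⟩
    rw [List.getElem?_ofFn]
    simp; omega

/-! ### Counting geodesics through an edge -/

theorem chain_z {w A B : List (Fin 3)} {D : ℕ} (hl : w.length = D + 1) (hw : w.IsChain (· ≠ ·))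
    (hA : (w.getD 0 0 :: A).IsChain (· ≠ ·)) (hB : (w.getD D 0 :: B).IsChain (· ≠ ·)) :
    (A.reverse ++ w ++ B).IsChain (· ≠ ·) := by
  have h1 : (A.reverse ++ w).IsChain (· ≠ ·) := by
    obtain ⟨c, w', rfl⟩ := List.exists_cons_of_length_pos (l := w) (by omega)
    rw [List.isChain_split]
    refine ⟨?_, hw⟩
    rw [← List.reverse_cons, List.isChain_reverse]
    simp only [List.getD_cons_zero] at hA
    exact hA.imp (fun a b h => h.symm)
  have h2 : w = w.dropLast ++ [w.getD D 0] := by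
    conv_lhs => rw [← List.dropLast_append_getLast (l := w) (by intro h; simp [h] at hl)]
    rw [List.getLast_eq_getElem, List.getD_eq_getElem _ _ (by omega)]
    simp [hl]
  rw [h2] at h1 ⊢
  rw [← List.append_assoc] at h1
  rw [show A.reverse ++ (w.dropLast ++ [w.getD D 0]) ++ B
    = (A.reverse ++ w.dropLast) ++ w.getD D 0 :: B by simp, List.isChain_split]
  exact ⟨h1, hB⟩

/-- The context `q = (A, B)`, standing for the walk spelled by `A.reverse ++ w ++ B`, admits a walk
of length `k - s` between the same endpoints. The left part is stored reversed so that both parts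
are extensions of `w` outwards, and elements of `rightExt`. -/
def Bad (w : List (Fin 3)) (D k s : ℕ) (q : List (Fin 3) × List (Fin 3)) : Prop :=
  ∀ i < D - k + s, (q.1.reverse ++ w ++ q.2).getD (k - s + i) 0 =
    (q.1.reverse ++ w ++ q.2).getD (k + i) 0

/-- Contexts without shortcuts spell geodesics of length `k` with `e` as edge number `a + 1`, and the
endpoints determine the context since `k ≤ D`. -/
theorem good_le {D k a : ℕ} (hk1 : 1 ≤ k) (hk : k ≤ D) (ha : a < k) (e : Edge 2 D) :
    ((rightExt a (e.word.getD 0 0) ×ˢ rightExt (k - 1 - a) (e.word.getD D 0)).filter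
      (fun q => ∀ s ∈ Finset.Icc 1 k, ¬ Bad e.word D k s q)).card ≤ N e k (a + 1) := by
  obtain ⟨hl, hc, hsrc, htgt⟩ := e.word_facts (by omega)
  unfold N
  rw [Set.ncard_eq_toFinset_card _ (Set.toFinite _)]
  apply Finset.card_le_card_of_forall_subsingleton (fun q xy =>
    xy.1.word = (q.1.reverse ++ e.word ++ q.2).take D ∧
      xy.2.word = (q.1.reverse ++ e.word ++ q.2).drop k)
  · rintro ⟨A, B⟩ hq
    simp only [Finset.mem_filter, Finset.mem_product] at hq
    obtain ⟨⟨hA, hB⟩, hgood⟩ := hq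
    obtain ⟨hAl, hAc⟩ := mem_rightExt _ _ _ hA
    obtain ⟨hBl, hBc⟩ := mem_rightExt _ _ _ hB
    have hz := chain_z hl hc hAc hBc
    have hzl : (A.reverse ++ e.word ++ B).length = D + k := by simp; omega
    obtain ⟨p, hp, hpc, hpv⟩ := exists_walk _ hzl hz
    obtain ⟨x, hx, hxw⟩ := hpv 0 (by omega)
    obtain ⟨y, hy, hyw⟩ := hpv k le_rfl
    obtain ⟨u, hu, huw⟩ := hpv a (by omega)
    obtain ⟨v, hv, hvw⟩ := hpv (a + 1) (by omega)
    have hyw' : y.word = (A.reverse ++ e.word ++ B).drop k := by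
      rw [hyw, List.take_of_length_le]; simp; omega
    have hwalk : IsWalk p x y := by
      refine ⟨?_, ?_, hpc⟩
      · rw [List.head?_eq_getElem?]; exact hx
      · rw [List.getLast?_eq_getElem?, hp]; simpa using hy
    refine ⟨(x, y), ?_, by simpa using hxw, hyw'⟩
    simp only [Set.Finite.mem_toFinset, Set.mem_ofPred_eq]
    constructor
    · apply le_antisymm
      · exact Nat.sInf_le ⟨p, hwalk, hp⟩
      · unfold dist
        refine le_csInf ?_ ?_
        · exact ⟨k, p, hwalk, hp⟩
        rintro r ⟨p', hw', hp'⟩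
        by_contra hlt
        push Not at hlt
        refine hgood (k - r) (by simp; omega) ?_
        intro i hi
        have h1 := walk_getD p' x y r hw' hp' i (by omega)
        rw [hyw', hxw] at h1
        rw [List.getD_eq_getElem _ _ (by simp; omega),
          List.getD_eq_getElem _ _ (by simp; omega)] at h1 ⊢
        simp only [List.getElem_drop, List.getElem_take] at h1
        rw [h1]
        congr 1
        omega
    · refine ⟨p, hwalk, hp, ?_, ?_⟩
      · simp only [Nat.add_sub_cancel]
        rw [hu]
        congr 1
        apply Vertex.ext'
        rw [huw, ← hsrc, List.append_assoc, List.drop_append_of_le_length (by simp; omega),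
          List.drop_of_length_le (by simp; omega), List.nil_append,
          List.take_append_of_le_length (by omega)]
      · rw [hv]
        congr 1
        apply Vertex.ext'
        rw [hvw, ← htgt, List.append_assoc, List.drop_append]
        rw [List.drop_of_length_le (by simp; omega), List.nil_append]
        rw [show a + 1 - A.reverse.length = 1 by simp; omega,
          List.drop_append_of_le_length (by omega), List.take_append_of_le_length (by simp; omega),
          List.take_of_length_le (by simp; omega)]
  · rintro ⟨x, y⟩ _ ⟨A, B⟩ ⟨h1, h2, h3⟩ ⟨A', B'⟩ ⟨h4, h5, h6⟩
    simp only [Finset.mem_filter, Finset.mem_product] at h1 h4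
    have hAl := (mem_rightExt _ _ _ h1.1.1).1
    have hAl' := (mem_rightExt _ _ _ h4.1.1).1
    have hBl := (mem_rightExt _ _ _ h1.1.2).1
    have hBl' := (mem_rightExt _ _ _ h4.1.2).1
    simp only at h2 h3 h5 h6 hAl hAl' hBl hBl'
    rw [h2] at h5
    rw [h3] at h6
    have heq : A.reverse ++ e.word ++ B = A'.reverse ++ e.word ++ B' := by
      have h7 := congrArg (List.drop (D - k)) h6
      rw [List.drop_drop, List.drop_drop, show k + (D - k) = D by omega] at h7
      rw [← List.take_append_drop D (A.reverse ++ e.word ++ B), h5, h7, List.take_append_drop]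
    rw [List.append_assoc, List.append_assoc] at heq
    obtain ⟨h8, h9⟩ := List.append_inj heq (by simp; omega)
    obtain ⟨_, h10⟩ := List.append_inj h9 rfl
    rw [List.reverse_inj.mp h8, h10]

theorem getD_left {w A B : List (Fin 3)} {i : ℕ} (hi : i < A.length) :
    (A.reverse ++ w ++ B).getD i 0 = A.getD (A.length - 1 - i) 0 := by
  rw [List.append_assoc, List.getD_append _ _ _ _ (by simpa using hi), getD_reverse hi]

theorem getD_mid {w A B : List (Fin 3)} {i : ℕ} (hi : i < w.length) :
    (A.reverse ++ w ++ B).getD (A.length + i) 0 = w.getD i 0 := by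
  rw [List.append_assoc, List.getD_append_right _ _ _ _ (by simp),
    List.getD_append _ _ _ _ (by simpa using hi)]
  simp

theorem getD_right {w A B : List (Fin 3)} {i : ℕ} :
    (A.reverse ++ w ++ B).getD (A.length + w.length + i) 0 = B.getD i 0 := by
  rw [List.getD_append_right _ _ _ _ (by simp)]
  simp

/-- A shortcut by `s` amounts to a factor of period `s`. If it lies inside `w`, then `w` contains a
square; if it covers `w`, then `w` has a border. Otherwise it overhangs `w` on exactly one side. -/
theorem bad_le {w : List (Fin 3)} {D k a s : ℕ} (hl : w.length = D + 1) (hsf : SquareFree w)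
    (hub : Unbordered w) (hk : k ≤ D) (ha : a < k) (hs1 : 1 ≤ s) (hsk : s ≤ k) :
    ((rightExt a (w.getD 0 0) ×ˢ rightExt (k - 1 - a) (w.getD D 0)).filter (Bad w D k s)).card ≤
      forcedTerm w D k a s + forcedTerm w.reverse D k (k - 1 - a) s := by
  obtain ⟨b, hb⟩ : ∃ b, b = k - 1 - a := ⟨_, rfl⟩
  rw [← hb]
  have hmem : ∀ q ∈ (rightExt a (w.getD 0 0) ×ˢ rightExt b (w.getD D 0)).filter (Bad w D k s),
      q.1.length = a ∧ q.2.length = b ∧ Bad w D k s q := by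
    intro q hq
    simp only [Finset.mem_filter, Finset.mem_product] at hq
    exact ⟨(mem_rightExt _ _ _ hq.1.1).1, (mem_rightExt _ _ _ hq.1.2).1, hq.2⟩
  -- both letters of the constraint lie in `w`
  have hmid : ∀ q : List (Fin 3) × List (Fin 3), q.1.length = a → Bad w D k s q →
      ∀ t, k ≤ a + t + s → a + t < D → t + s ≤ D → w.getD t 0 = w.getD (t + s) 0 := by
    intro q hqa hbad t h1 h2 h3
    have := hbad (a + t + s - k) (by omega)
    rw [show k - s + (a + t + s - k) = q.1.length + t by omega,
      show k + (a + t + s - k) = q.1.length + (t + s) by omega, getD_mid (by omega),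
      getD_mid (by omega)] at this
    exact this
  by_cases hne : ((rightExt a (w.getD 0 0) ×ˢ rightExt b (w.getD D 0)).filter (Bad w D k s)).Nonempty
  swap
  · rw [Finset.not_nonempty_iff_eq_empty.mp hne]; simp
  obtain ⟨q₀, hq₀⟩ := hne
  obtain ⟨hq1, hq2, hq3⟩ := hmem q₀ hq₀
  have hw₀ := hmid q₀ hq1 hq3
  by_cases c1 : s ≤ a + 1 ∧ s ≤ b + 1
  · exfalso
    refine hsf.no_square (i := k - s - a) (p := s) hs1 (by omega) ?_
    intro t ht
    rw [hw₀ (k - s - a + t) (by omega) (by omega) (by omega)]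
    congr 1; omega
  by_cases c2 : a + 1 ≤ s ∧ b + 1 ≤ s
  · exfalso
    refine hub.no_period hs1 (by omega) ?_
    intro t ht
    exact hw₀ t (by omega) (by omega) (by omega)
  by_cases c3 : s ≤ a
  · -- the constraint forces the last `s - b - 1` letters before `w`
    refine le_trans ?_ (Nat.le_add_right _ _)
    have hpre : Pre w (D - a) s := by
      intro t ht
      rw [hw₀ t (by omega) (by omega) (by omega), add_comm]
    rw [forcedTerm, if_pos ⟨by omega, c3, hpre⟩]
    let F := List.ofFn (fun i : Fin (s - b - 1) => w.getD (s - 1 - (i : ℕ)) 0)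
    have hF : F.length = s - b - 1 := by simp [F]
    calc _ ≤ (((rightExt a (w.getD 0 0)).filter (fun A => F <+: A)) ×ˢ rightExt b (w.getD D 0)).card := by
          apply Finset.card_le_card
          intro q hq
          obtain ⟨h1, h2, h3⟩ := hmem q hq
          simp only [Finset.mem_filter, Finset.mem_product] at hq ⊢
          refine ⟨⟨hq.1.1, ?_⟩, hq.1.2⟩
          apply prefix_of_getD (fun i => w.getD (s - 1 - i) 0) (by omega)
          intro i hi
          have := h3 (a - 1 - i + s - k) (by omega)
          rw [show k - s + (a - 1 - i + s - k) = a - 1 - i by omega,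
            show k + (a - 1 - i + s - k) = q.1.length + (s - 1 - i) by omega,
            getD_left (by omega), getD_mid (by omega)] at this
          rw [← this]
          congr 1; omega
      _ ≤ 2 ^ (a - F.length) * 2 ^ b := by
          rw [Finset.card_product, card_rightExt]
          exact Nat.mul_le_mul_right _ (card_fixed _ _ _ (by omega))
      _ = _ := by rw [← pow_add]; congr 1; omega
  · -- the constraint forces the first `s - a - 1` letters after `w`
    refine le_trans ?_ (Nat.le_add_left _ _)
    have hpre : Pre w.reverse (D - b) s := by
      intro t ht
      rw [getD_reverse (by omega), getD_reverse (by omega),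
        show w.length - 1 - t = w.length - 1 - (s + t) + s by omega]
      exact (hw₀ _ (by omega) (by omega) (by omega)).symm
    rw [forcedTerm, if_pos ⟨by omega, by omega, hpre⟩]
    let F := List.ofFn (fun i : Fin (s - a - 1) => w.getD (D + 1 + (i : ℕ) - s) 0)
    have hF : F.length = s - a - 1 := by simp [F]
    calc _ ≤ (rightExt a (w.getD 0 0) ×ˢ ((rightExt b (w.getD D 0)).filter (fun B => F <+: B))).card := by
          apply Finset.card_le_card
          intro q hq
          obtain ⟨h1, h2, h3⟩ := hmem q hq
          simp only [Finset.mem_filter, Finset.mem_product] at hq ⊢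
          refine ⟨hq.1.1, hq.1.2, ?_⟩
          apply prefix_of_getD (fun i => w.getD (D + 1 + i - s) 0) (by omega)
          intro i hi
          have := h3 (a + D + 1 + i - k) (by omega)
          rw [show k - s + (a + D + 1 + i - k) = q.1.length + (D + 1 + i - s) by omega,
            show k + (a + D + 1 + i - k) = q.1.length + w.length + i by omega,
            getD_mid (by omega), getD_right] at this
          exact this.symm
      _ ≤ 2 ^ a * 2 ^ (b - F.length) := by
          rw [Finset.card_product, card_rightExt]
          exact Nat.mul_le_mul_left _ (card_fixed _ _ _ (by omega))
      _ = _ := by rw [← pow_add]; congr 1; omega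

theorem N_lower {D k a : ℕ} (hk : k ≤ D) (ha : a < k) (e : Edge 2 D)
    (hsf : SquareFree e.word) (hub : Unbordered e.word) :
    2 ^ (k - 1) ≤ N e k (a + 1) + ∑ s ∈ Finset.Icc 1 k,
      (forcedTerm e.word D k a s + forcedTerm e.word.reverse D k (k - 1 - a) s) := by
  have hl := (e.word_facts (by omega)).1
  set P := rightExt a (e.word.getD 0 0) ×ˢ rightExt (k - 1 - a) (e.word.getD D 0) with hP
  have hcard : P.card = 2 ^ (k - 1) := by
    rw [hP, Finset.card_product, card_rightExt, card_rightExt, ← pow_add]; congr 1; omega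
  rw [← hcard]
  calc P.card ≤ (P.filter (fun q => ∀ s ∈ Finset.Icc 1 k, ¬ Bad e.word D k s q) ∪
        (Finset.Icc 1 k).biUnion (fun s => P.filter (Bad e.word D k s))).card := by
        apply Finset.card_le_card
        intro q hq
        simp only [Finset.mem_union, Finset.mem_filter, Finset.mem_biUnion]
        by_cases h : ∀ s ∈ Finset.Icc 1 k, ¬ Bad e.word D k s q
        · exact Or.inl ⟨hq, h⟩
        · push Not at h
          obtain ⟨s, hs, hb⟩ := h
          exact Or.inr ⟨s, hs, hq, hb⟩
    _ ≤ _ := Finset.card_union_le _ _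
    _ ≤ _ := Nat.add_le_add (good_le (by omega) hk ha e) (Finset.card_biUnion_le.trans
        (Finset.sum_le_sum (fun s hs => by
          rw [Finset.mem_Icc] at hs
          exact bad_le hl hsf hub hk ha hs.1 hs.2)))

theorem cong_lower {D : ℕ} (e : Edge 2 D) (hsf : SquareFree e.word) (hub : Unbordered e.word) :
    ∑ k ∈ Finset.Icc 1 D, k * 2 ^ (k - 1) ≤ cong e + (forcedSum e.word D + forcedSum e.word.reverse D) := by
  unfold cong U forcedSum
  rw [← Finset.sum_add_distrib, ← Finset.sum_add_distrib]
  apply Finset.sum_le_sum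
  intro k hk
  rw [Finset.mem_Icc] at hk
  have h1 : ∑ t ∈ Finset.Icc 1 k, N e k t = ∑ a ∈ Finset.range k, N e k (a + 1) := by
    refine Finset.sum_nbij' (fun t => t - 1) (fun a => a + 1) ?_ ?_ ?_ ?_ ?_
    all_goals intro t ht; simp at ht ⊢
    all_goals try omega
    congr 1; omega
  have h2 : ∑ a ∈ Finset.range k, ∑ s ∈ Finset.Icc 1 k, forcedTerm e.word.reverse D k a s =
      ∑ a ∈ Finset.range k, ∑ s ∈ Finset.Icc 1 k, forcedTerm e.word.reverse D k (k - 1 - a) s :=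
    (Finset.sum_range_reflect
      (fun a => ∑ s ∈ Finset.Icc 1 k, forcedTerm e.word.reverse D k a s) k).symm
  rw [h1, h2, ← Finset.sum_add_distrib, ← Finset.sum_add_distrib]
  calc k * 2 ^ (k - 1) = ∑ a ∈ Finset.range k, 2 ^ (k - 1) := by simp
    _ ≤ _ := Finset.sum_le_sum (fun a ha => by
      rw [← Finset.sum_add_distrib]
      exact N_lower hk.2 (Finset.mem_range.mp ha) e hsf hub)

end Kautz

/-- If `D > 3`, `e` is a directed edge of `K(2,D)` whose edge-word is
unbordered and square-free, and `Ω(e) < (D−3)/8`, then `cong(e) > τ(2,D)`. -/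
theorem statement15 (D : ℕ) (hD : 3 < D) (e : Kautz.Edge 2 D)
    (hub : Kautz.Unbordered e.word) (hsf : Kautz.SquareFree e.word)
    (hW : Kautz.Omega e < ((D : ℝ) - 3) / 8) :
    Kautz.tau 2 D < Kautz.cong e :=
  Kautz.final_arith hD e (e.word_facts (by omega)).1 hsf hW (Kautz.cong_lower e hsf hub)
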